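/- Let f : ℝ → ℝ be a 1-periodic twice continuously differentiable function. Suppose there exist pairwise disjoint open intervals (a_1,b_1),…,(a_s,b_s) contained in one period of the circle ℝ/ℤ and a real number a > 0 such that |f'(x)| ≥ a for every x of the circle outside the union of these intervals. Then |∫_0^1 e^{2πi f(x)} dx| ≤ (1/(2π))·||f''||_∞/a² + s/(π·a) + Σ_{j=1}^s (b_j − a_j). -/

import Mathlib

/-!
Let `M` bound `|f''|` on `[0, 1]`. With `e f = exp (2πi f)`, the function `G = e f / (2πi f')` satisfies
`G' = e f - e f * f'' / (2πi f'^2)` wherever `f' ≠ 0`. On an interval `[p, q]` where `|f'| ≥ A`,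
this gives `‖∫ e f - (G q - G p)‖ ≤ M (q - p) / (2π A²)` (`vdc_good`). Across an exceptional interval
`[a_j, b_j]` the integral is at most `b_j - a_j` and the increment of `G` at most `1 / (π A)`
(`vdc_bad`). Both estimates control the same additive quantity `∫ e f - (G q - G p)`, so they can
be glued by cutting `[p, q]` at one exceptional interval and inducting on the remaining ones, which
lie to its left or to its right (`vdc_glue`). On `[0, 1]` the total increment of `G` vanishes by
periodicity; keeping track of it, rather than bounding each boundary term, is what makes the
constant `s` instead of `s + 1`.
-/

open Real Set

/-- The oscillating integrand `exp (2πi f(x))`. -/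
noncomputable def vdcE (f : ℝ → ℝ) (x : ℝ) : ℂ :=
  Complex.exp (2 * Real.pi * Complex.I * (f x : ℂ))

/-- The approximate primitive `exp (2πi f) / (2πi f')` of `exp (2πi f)`; it takes the value `0`
where `f'` vanishes. -/
noncomputable def vdcG (f : ℝ → ℝ) (x : ℝ) : ℂ :=
  vdcE f x / (2 * Real.pi * Complex.I * ((deriv f x : ℝ) : ℂ))

lemma norm_vdcE (f : ℝ → ℝ) (x : ℝ) : ‖vdcE f x‖ = 1 := by
  have : (2 * Real.pi * Complex.I * (f x : ℂ)) = ((2 * Real.pi * f x : ℝ) : ℂ) * Complex.I := by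
    push_cast; ring
  rw [vdcE, this, Complex.norm_exp_ofReal_mul_I]

lemma continuous_vdcE {f : ℝ → ℝ} (hf : Continuous f) : Continuous (vdcE f) := by
  unfold vdcE
  fun_prop

lemma norm_vdcG_le {f : ℝ → ℝ} {A x : ℝ} (hA : 0 < A) (hx : A ≤ |deriv f x|) :
    ‖vdcG f x‖ ≤ 1 / (2 * Real.pi * A) := by
  have hpi := Real.pi_pos
  rw [vdcG, norm_div, norm_vdcE]
  simp only [norm_mul, Complex.norm_I, Complex.norm_real, Complex.norm_ofNat, mul_one,
    Real.norm_eq_abs, abs_of_pos hpi]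
  gcongr

lemma hasDerivAt_vdcG {f : ℝ → ℝ} (hf : ContDiff ℝ 2 f) {x : ℝ} (hx : deriv f x ≠ 0) :
    HasDerivAt (vdcG f) (vdcE f x - vdcE f x * ((deriv (deriv f) x : ℝ) : ℂ) /
      (2 * Real.pi * Complex.I * ((deriv f x : ℝ) : ℂ) ^ 2)) x := by
  have hd : ContDiff ℝ 1 (deriv f) := by
    have : ContDiff ℝ (1 + 1) f := by simpa [one_add_one_eq_two] using hf
    exact (contDiff_succ_iff_deriv.1 this).2.2
  have h1 : HasDerivAt f (deriv f x) x :=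
    (hf.differentiable (by norm_num) x).hasDerivAt
  have h2 : HasDerivAt (deriv f) (deriv (deriv f) x) x :=
    (hd.differentiable (by norm_num) x).hasDerivAt
  have hE : HasDerivAt (vdcE f) (vdcE f x * (2 * Real.pi * Complex.I * ((deriv f x : ℝ) : ℂ))) x :=
    (h1.ofReal_comp.const_mul (2 * Real.pi * Complex.I)).cexp
  have hx' : ((deriv f x : ℝ) : ℂ) ≠ 0 := by exact_mod_cast hx
  have hpi : (Real.pi : ℂ) ≠ 0 := by exact_mod_cast Real.pi_ne_zero
  have hI := Complex.I_ne_zero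
  have := hE.div (h2.ofReal_comp.const_mul (2 * Real.pi * Complex.I))
    (by simp [hx', hpi])
  refine this.congr_deriv ?_
  field_simp

/-- Integration by parts on an interval where `|f'| ≥ A`. -/
lemma vdc_good {f : ℝ → ℝ} (hf : ContDiff ℝ 2 f) {A M p q : ℝ} (hA : 0 < A) (hpq : p ≤ q)
    (hM : ∀ x ∈ Icc p q, |deriv (deriv f) x| ≤ M)
    (hlow : ∀ x ∈ Icc p q, A ≤ |deriv f x|) :
    ‖(∫ x in p..q, vdcE f x) - (vdcG f q - vdcG f p)‖ ≤
      1 / (2 * Real.pi) * M / A ^ 2 * (q - p) := by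
  have hpi := Real.pi_pos
  have hne : ∀ x ∈ Icc p q, deriv f x ≠ 0 := fun x hx =>
    abs_pos.1 (hA.trans_le (hlow x hx))
  have hd : ContDiff ℝ 1 (deriv f) := by
    have : ContDiff ℝ (1 + 1) f := by simpa [one_add_one_eq_two] using hf
    exact (contDiff_succ_iff_deriv.1 this).2.2
  have c0 := continuous_vdcE hf.continuous
  have c1 : Continuous (deriv f) := hd.continuous
  have c2 : Continuous (deriv (deriv f)) := hd.continuous_deriv (by norm_num)
  have hr : ContinuousOn (fun x => vdcE f x * ((deriv (deriv f) x : ℝ) : ℂ) /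
      (2 * Real.pi * Complex.I * ((deriv f x : ℝ) : ℂ) ^ 2)) (uIcc p q) := by
    rw [uIcc_of_le hpq]
    refine ContinuousOn.div (by fun_prop) (by fun_prop) fun x hx => ?_
    have := hne x hx
    simp [this, hpi.ne']
  have key := intervalIntegral.integral_eq_sub_of_hasDerivAt (a := p) (b := q)
    (fun x hx => hasDerivAt_vdcG hf (hne x (by rwa [uIcc_of_le hpq] at hx)))
    (c0.continuousOn.sub hr).intervalIntegrable
  rw [← key, intervalIntegral.integral_sub (c0.intervalIntegrable _ _) hr.intervalIntegrable,
    sub_sub_cancel]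
  have hb := intervalIntegral.norm_integral_le_of_norm_le_const (a := p) (b := q)
    (f := fun x => vdcE f x * ((deriv (deriv f) x : ℝ) : ℂ) /
      (2 * Real.pi * Complex.I * ((deriv f x : ℝ) : ℂ) ^ 2))
    (C := 1 / (2 * Real.pi) * M / A ^ 2) (by
      intro x hx
      rw [uIoc_of_le hpq] at hx
      have hx' : x ∈ Icc p q := Ioc_subset_Icc_self hx
      have hM0 : 0 ≤ M := (abs_nonneg _).trans (hM x hx')
      rw [norm_div, norm_mul, norm_vdcE]
      simp only [norm_mul, norm_pow, Complex.norm_I, Complex.norm_real, Complex.norm_ofNat,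
        mul_one, one_mul, Real.norm_eq_abs, abs_of_pos hpi]
      calc |deriv (deriv f) x| / (2 * Real.pi * |deriv f x| ^ 2)
          ≤ M / (2 * Real.pi * A ^ 2) := by
            have := hM x hx'
            have := hlow x hx'
            gcongr
        _ = _ := by field_simp)
  rwa [abs_of_nonneg (sub_nonneg.2 hpq)] at hb

/-- Trivial estimate across an exceptional interval: only `|f'| ≥ A` at its ends is used. -/
lemma vdc_bad {f : ℝ → ℝ} {A p q : ℝ} (hA : 0 < A) (hpq : p ≤ q)
    (hp : A ≤ |deriv f p|) (hq : A ≤ |deriv f q|) :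
    ‖(∫ x in p..q, vdcE f x) - (vdcG f q - vdcG f p)‖ ≤ 1 / (Real.pi * A) + (q - p) := by
  have hI := intervalIntegral.norm_integral_le_of_norm_le_const (a := p) (b := q)
    (f := vdcE f) (C := 1) (fun x _ => (norm_vdcE f x).le)
  rw [abs_of_nonneg (sub_nonneg.2 hpq), one_mul] at hI
  have h1 := norm_sub_le (∫ x in p..q, vdcE f x) (vdcG f q - vdcG f p)
  have h2 := norm_sub_le (vdcG f q) (vdcG f p)
  have h3 := norm_vdcG_le hA hp
  have h4 := norm_vdcG_le hA hq
  have hpi := Real.pi_pos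
  have h5 : 1 / (Real.pi * A) = 1 / (2 * Real.pi * A) + 1 / (2 * Real.pi * A) := by
    field_simp; norm_num
  linarith

/-- Gluing of the two estimates over `[p, q]` minus finitely many exceptional intervals. Disjointness
is encoded as an order relation between any two distinct intervals, so no sorting is needed. -/
lemma vdc_glue {f : ℝ → ℝ} (hf : ContDiff ℝ 2 f) {A M : ℝ} (hA : 0 < A) {ι : Type*}
    [DecidableEq ι] {a b : ι → ℝ} (hab : ∀ j, a j < b j)
    (hsep : ∀ i j, i ≠ j → b i ≤ a j ∨ b j ≤ a i) (S : Finset ι) :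
    ∀ p q : ℝ, p ≤ q → (∀ x ∈ Icc p q, |deriv (deriv f) x| ≤ M) →
      (∀ j ∈ S, p ≤ a j ∧ b j ≤ q) →
      (∀ x ∈ Icc p q, (∀ j ∈ S, x ∉ Ioo (a j) (b j)) → A ≤ |deriv f x|) →
      ‖(∫ x in p..q, vdcE f x) - (vdcG f q - vdcG f p)‖ ≤
        1 / (2 * Real.pi) * M / A ^ 2 * (q - p) + ∑ j ∈ S, (1 / (Real.pi * A) + (b j - a j)) := by
  induction S using Finset.strongInduction with
  | H S ih =>
  intro p q hpq hM hS hlow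
  rcases S.eq_empty_or_nonempty with rfl | ⟨j, hj⟩
  · simpa using vdc_good hf hA hpq hM (fun x hx => hlow x hx (by simp))
  have hpi := Real.pi_pos
  obtain ⟨hpa, hbq⟩ := hS j hj
  have hjj := hab j
  set L := (S.erase j).filter (fun i => b i ≤ a j) with hL
  set R := (S.erase j).filter (fun i => ¬ b i ≤ a j) with hR
  have hR' : ∀ i ∈ R, b j ≤ a i := by
    intro i hi
    simp only [hR, Finset.mem_filter, Finset.mem_erase] at hi
    exact (hsep i j hi.1.1).resolve_left hi.2
  have hLS : L ⊂ S := (Finset.filter_subset _ _).trans_ssubset (Finset.erase_ssubset hj)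
  have hRS : R ⊂ S := (Finset.filter_subset _ _).trans_ssubset (Finset.erase_ssubset hj)
  have hL' : ∀ i ∈ L, b i ≤ a j := fun i hi => (Finset.mem_filter.1 hi).2
  have hmem : ∀ i ∈ S, i = j ∨ i ∈ L ∨ i ∈ R := by
    intro i hi
    by_cases h : i = j
    · exact Or.inl h
    · simp only [hL, hR, Finset.mem_filter, Finset.mem_erase]
      tauto
  have hsum : ∑ i ∈ S, (1 / (Real.pi * A) + (b i - a i)) =
      (1 / (Real.pi * A) + (b j - a j)) + (∑ i ∈ L, (1 / (Real.pi * A) + (b i - a i)) +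
        ∑ i ∈ R, (1 / (Real.pi * A) + (b i - a i))) := by
    rw [hL, hR, Finset.sum_filter_add_sum_filter_not,
      Finset.add_sum_erase S (fun i => 1 / (Real.pi * A) + (b i - a i)) hj]
  have lowL : ∀ x ∈ Icc p (a j), (∀ i ∈ L, x ∉ Ioo (a i) (b i)) → A ≤ |deriv f x| := by
    intro x hx h
    refine hlow x ⟨hx.1, by linarith [hx.2]⟩ fun i hi => ?_
    rcases hmem i hi with rfl | hi | hi
    · exact fun h' => absurd h'.1 (not_lt.2 hx.2)
    · exact h i hi
    · exact fun h' => by linarith [h'.1, hx.2, hR' i hi]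
  have lowR : ∀ x ∈ Icc (b j) q, (∀ i ∈ R, x ∉ Ioo (a i) (b i)) → A ≤ |deriv f x| := by
    intro x hx h
    refine hlow x ⟨by linarith [hx.1], hx.2⟩ fun i hi => ?_
    rcases hmem i hi with rfl | hi | hi
    · exact fun h' => absurd h'.2 (not_lt.2 hx.1)
    · exact fun h' => by linarith [h'.2, hx.1, hL' i hi]
    · exact h i hi
  have eL := ih L hLS p (a j) hpa (fun x hx => hM x ⟨hx.1, by linarith [hx.2]⟩)
    (fun i hi => ⟨(hS i (hLS.1 hi)).1, hL' i hi⟩) lowL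
  have eR := ih R hRS (b j) q hbq (fun x hx => hM x ⟨by linarith [hx.1], hx.2⟩)
    (fun i hi => ⟨hR' i hi, (hS i (hRS.1 hi)).2⟩) lowR
  have eM := vdc_bad hA hjj.le
    (lowL (a j) ⟨hpa, le_rfl⟩ fun i hi h => by linarith [h.2, hL' i hi])
    (lowR (b j) ⟨le_rfl, hbq⟩ fun i hi h => by linarith [h.1, hR' i hi])
  have hM0 : 0 ≤ M := (abs_nonneg _).trans (hM p ⟨le_rfl, hpq⟩)
  have c0 := continuous_vdcE hf.continuous
  have hI : ∫ x in p..q, vdcE f x = (∫ x in p..a j, vdcE f x) + (∫ x in a j..b j, vdcE f x) +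
      ∫ x in b j..q, vdcE f x := by
    rw [intervalIntegral.integral_add_adjacent_intervals (c0.intervalIntegrable _ _)
      (c0.intervalIntegrable _ _), intervalIntegral.integral_add_adjacent_intervals
      (c0.intervalIntegrable _ _) (c0.intervalIntegrable _ _)]
  have hsplit : (∫ x in p..q, vdcE f x) - (vdcG f q - vdcG f p) =
      ((∫ x in p..a j, vdcE f x) - (vdcG f (a j) - vdcG f p)) +
      ((∫ x in a j..b j, vdcE f x) - (vdcG f (b j) - vdcG f (a j))) +
      ((∫ x in b j..q, vdcE f x) - (vdcG f q - vdcG f (b j))) := by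
    rw [hI]; ring
  rw [hsplit, hsum]
  refine norm_add₃_le.trans ?_
  have hK : 0 ≤ 1 / (2 * Real.pi) * M / A ^ 2 * (b j - a j) :=
    mul_nonneg (by positivity) (sub_nonneg.2 hjj.le)
  linarith


/-- (A van der Corput-type lemma.) Let `f : ℝ → ℝ` be 1-periodic and
twice continuously differentiable. Suppose `(a_1,b_1), …, (a_s,b_s)` are pairwise
disjoint open intervals contained in one period `[0,1]` of the circle, and `A > 0` is
such that `|f'(x)| ≥ A` for every point `x` of the period outside the union of these
intervals. Then
`|∫_0^1 e^{2πi f(x)} dx| ≤ (1/(2π))·‖f''‖_∞/A² + s/(π A) + Σ_j (b_j − a_j)`. -/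
theorem van_der_corput_lemma (f : ℝ → ℝ) (hper : ∀ x, f (x + 1) = f x)
    (hreg : ContDiff ℝ 2 f)
    (s : ℕ) (a b : Fin s → ℝ) (hab : ∀ j, a j < b j)
    (h0 : ∀ j, 0 ≤ a j) (h1 : ∀ j, b j ≤ 1)
    (hdisj : Pairwise fun i j => Disjoint (Ioo (a i) (b i)) (Ioo (a j) (b j)))
    (A : ℝ) (hA : 0 < A)
    (hlow : ∀ x ∈ Icc (0 : ℝ) 1, (∀ j, x ∉ Ioo (a j) (b j)) → A ≤ |deriv f x|) :
    ‖∫ x in (0 : ℝ)..1, Complex.exp (2 * Real.pi * Complex.I * (f x : ℂ))‖ ≤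
      1 / (2 * Real.pi) * sSup ((fun x => |deriv (deriv f) x|) '' Icc (0 : ℝ) 1) / A ^ 2
        + s / (Real.pi * A) + ∑ j, (b j - a j) := by
  have hsep : ∀ i j, i ≠ j → b i ≤ a j ∨ b j ≤ a i := by
    intro i j hij
    have h := Set.Ioo_disjoint_Ioo.1 (hdisj hij)
    have hi := hab i
    have hj := hab j
    rcases min_le_iff.1 h with h | h <;> rcases le_max_iff.1 h with h | h
    · linarith
    · exact Or.inl h
    · exact Or.inr h
    · linarith
  have hd : ContDiff ℝ 1 (deriv f) := by
    have : ContDiff ℝ (1 + 1) f := by simpa [one_add_one_eq_two] using hreg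
    exact (contDiff_succ_iff_deriv.1 this).2.2
  have c2 : Continuous (deriv (deriv f)) := hd.continuous_deriv (by norm_num)
  have hM : ∀ x ∈ Icc (0 : ℝ) 1, |deriv (deriv f) x| ≤
      sSup ((fun x => |deriv (deriv f) x|) '' Icc (0 : ℝ) 1) := fun x hx =>
    le_csSup (isCompact_Icc.image c2.abs).bddAbove (mem_image_of_mem _ hx)
  have key := vdc_glue hreg hA hab hsep Finset.univ 0 1 zero_le_one hM
    (fun j _ => ⟨h0 j, h1 j⟩) (fun x hx h => hlow x hx fun j => h j (Finset.mem_univ j))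
  have hf1 : f 1 = f 0 := by simpa using hper 0
  have hd1 : deriv f 1 = deriv f 0 := by
    have h := deriv_comp_add_const f 1 0
    rw [funext hper, zero_add] at h
    exact h.symm
  have hG : vdcG f 1 = vdcG f 0 := by simp only [vdcG, vdcE, hf1, hd1]
  rw [hG, sub_self, sub_zero, sub_zero, mul_one, Finset.sum_add_distrib, Finset.sum_const,
    Finset.card_univ, Fintype.card_fin, nsmul_eq_mul, mul_one_div, ← add_assoc] at key
  exact key
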